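/- arXiv:2505.19371 — 2 statements merged into one kernel-verified Lean document; each statement's English description precedes it below -/
import Mathlib

section
/- Let V ≥ 3, let p ∈ Δ_V have entries sorted in non-increasing order, let φ : [0,1] → ℝ be dual valid and continuously differentiable on [0,1] with φ'(0) = 0, and let λ ≥ 0. Define cost*(k) = min_{q ∈ Δ_k} [ Σ_{j=1}^k d_φ(p_j, q_j) + Σ_{j=k+1}^V d_φ(p_j, 0) ] + λk for k ∈ {1,…,V}. Then cost* is discretely convex in k: for every k ∈ {2,…,V−1}, cost*(k+1) − 2·cost*(k) + cost*(k−1) ≥ 0. -/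
/-!
Let `f_i = d_φ(p_i, ·)` and extend vectors supported on the first `k` coordinates by zero. Take `q`
and `r` feasible for `k + 1` and `k - 1`, and let `a < b` be the two coordinates in which these
constraints differ. With `t` such that `t (q_a + q_b) = q_b`, move the mass at `b` to `a` in the
mixtures `(1 - t) q + t r` and `t q + (1 - t) r`. The results are feasible for `k`, with entries
`q_a` and `q_b` at `a`, so for convex `f_i` their total cost is at most that of `q` and `r` as soon
as `f_a(y) - f_a(0) ≤ f_b(y) - f_b(0)`, which follows from `p_b ≤ p_a` and monotonicity of `φ'`.
No Lagrange multiplier and no existence of minimizers is needed.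

Each `f_i` is convex only on `[p_i, 1]`, but it is unimodal about `p_i`. As `∑ p_i ≤ 1`, any
feasible `q` can be traded for a feasible `x` that is no more expensive and has `p_i ≤ x_i` on its
support: scale the excess of `max(p, q)` over `p` until the total mass is `1`.

Monotonicity of `φ'` and unimodality both reduce to `d_φ ≥ 0`. The derivative of `d_φ(t, ·)` at `t`
is `0`, so convexity makes it nonnegative on `[t, 1]`. The secant slope of `φ` from `t` to `y` has
derivative `d_φ(t, y) / (y - t)²` in `y`, so it is at least `φ'(t)`, which says `d_φ(y, t) ≥ 0`.
-/


open Finset Set Filter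

/-- One-dimensional Bregman divergence `d_φ(x,y) = φ(x) − φ(y) − φ'(y)(x−y)`,
with the derivative `φ'` given explicitly. -/
noncomputable def breg (φ φ' : ℝ → ℝ) (x y : ℝ) : ℝ := φ x - φ y - φ' y * (x - y)

/-- The unregularized dual loss of keeping the top-`n` coordinates `{0,…,n−1}` of `p`:
the infimum over probability vectors supported on the first `n` coordinates of
`Σ_{j<n} d_φ(p_j, q_j) + Σ_{j≥n} d_φ(p_j, 0)`. -/
noncomputable def dualTopLoss {V : ℕ} (φ φ' : ℝ → ℝ) (p : Fin V → ℝ) (n : ℕ) : ℝ :=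
  sInf {r : ℝ | ∃ q : Fin V → ℝ, (∀ i, q i ∈ Set.Icc (0:ℝ) 1) ∧
    ((∑ i ∈ Finset.univ.filter (fun i : Fin V => (i : ℕ) < n), q i) = 1) ∧
    r = (∑ i ∈ Finset.univ.filter (fun i : Fin V => (i : ℕ) < n), breg φ φ' (p i) (q i)) +
        ∑ i ∈ Finset.univ.filter (fun i : Fin V => n ≤ (i : ℕ)), breg φ φ' (p i) 0}

/-- The `ℓ₀`-regularized dual cost `cost*(n) = min_{q ∈ Δ_n} D_φ(p,(q,0)) + λ·n`. -/
noncomputable def dualCost {V : ℕ} (φ φ' : ℝ → ℝ) (p : Fin V → ℝ) (lam : ℝ) (n : ℕ) : ℝ :=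
  dualTopLoss φ φ' p n + lam * (n : ℝ)

section Convexity

variable {E : Type*} [AddCommGroup E] [Module ℝ E] {s : Set E} {f : E → ℝ}

lemma convexOn_closure [TopologicalSpace E] [IsTopologicalAddGroup E] [ContinuousConstSMul ℝ E]
    (hf : ConvexOn ℝ s f) (hc : ContinuousOn f (closure s)) : ConvexOn ℝ (closure s) f := by
  refine ⟨hf.1.closure, fun x hx y hy α β hα hβ hαβ => ?_⟩
  have hxy : (x, y) ∈ closure (s ×ˢ s) := by
    rw [closure_prod_eq]
    exact ⟨hx, hy⟩
  have hfst : MapsTo Prod.fst (closure (s ×ˢ s)) (closure s) := fun z hz => by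
    rw [closure_prod_eq] at hz
    exact hz.1
  have hsnd : MapsTo Prod.snd (closure (s ×ˢ s)) (closure s) := fun z hz => by
    rw [closure_prod_eq] at hz
    exact hz.2
  refine le_on_closure (f := fun z : E × E => f (α • z.1 + β • z.2))
    (g := fun z => α • f z.1 + β • f z.2) (fun z hz => hf.2 hz.1 hz.2 hα hβ hαβ) ?_ ?_ hxy
  · exact hc.comp (by fun_prop) fun z hz => hf.1.closure (hfst hz) (hsnd hz) hα hβ hαβ
  · exact ((hc.comp continuousOn_fst hfst).const_smul α).add
      ((hc.comp continuousOn_snd hsnd).const_smul β)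

lemma add_map_mix_le_of_convexOn (hf : ConvexOn ℝ s f) {x y : E} {t : ℝ}
    (hx : x ∈ s) (hy : y ∈ s) (ht : t ∈ Set.Icc (0 : ℝ) 1) :
    f ((1 - t) • x + t • y) + f (t • x + (1 - t) • y) ≤ f x + f y := by
  have h₁ := hf.2 hx hy (sub_nonneg.2 ht.2) ht.1 (sub_add_cancel 1 t)
  have h₂ := hf.2 hx hy ht.1 (sub_nonneg.2 ht.2) (add_sub_cancel t 1)
  simp only [smul_eq_mul] at h₁ h₂
  linarith

end Convexity

section Bregman

variable {φ φ' : ℝ → ℝ}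

lemma breg_eq_add_breg_add (x y z : ℝ) :
    breg φ φ' x y = breg φ φ' x z + breg φ φ' z y + (φ' z - φ' y) * (x - z) := by
  unfold breg
  ring

lemma breg_add_breg_swap (x y : ℝ) :
    breg φ φ' x y + breg φ φ' y x = (φ' x - φ' y) * (x - y) := by
  unfold breg
  ring

lemma breg_sub_breg_le_of_le {x₁ x₂ y z : ℝ} (hx : x₂ ≤ x₁) (hyz : φ' z ≤ φ' y) :
    breg φ φ' x₁ y - breg φ φ' x₁ z ≤ breg φ φ' x₂ y - breg φ φ' x₂ z := by
  have h := mul_nonneg (sub_nonneg.2 hyz) (sub_nonneg.2 hx)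
  unfold breg
  linarith

lemma monotoneOn_of_breg_nonneg {s : Set ℝ}
    (hnonneg : ∀ x ∈ s, ∀ y ∈ s, 0 ≤ breg φ φ' x y) : MonotoneOn φ' s := by
  intro x hx y hy hxy
  rcases hxy.eq_or_lt with rfl | hlt
  · exact le_rfl
  · have h := add_nonneg (hnonneg y hy x hx) (hnonneg x hx y hy)
    rw [breg_add_breg_swap] at h
    exact sub_nonneg.1 (nonneg_of_mul_nonneg_left h (sub_pos.2 hlt))

lemma breg_le_breg_of_mem_uIcc {s : Set ℝ}
    (hnonneg : ∀ x ∈ s, ∀ y ∈ s, 0 ≤ breg φ φ' x y) {x y z : ℝ} (hy : y ∈ s) (hz : z ∈ s)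
    (hzxy : z ∈ Set.uIcc x y) : breg φ φ' x z ≤ breg φ φ' x y := by
  have hmono := monotoneOn_of_breg_nonneg hnonneg
  have hprod : 0 ≤ (φ' z - φ' y) * (x - z) := by
    rcases Set.mem_uIcc.1 hzxy with ⟨hxz, hzy⟩ | ⟨hyz, hzx⟩
    · exact mul_nonneg_of_nonpos_of_nonpos (sub_nonpos.2 (hmono hz hy hzy)) (sub_nonpos.2 hxz)
    · exact mul_nonneg (sub_nonneg.2 (hmono hy hz hyz)) (sub_nonneg.2 hzx)
  linarith [breg_eq_add_breg_add (φ := φ) (φ' := φ') x y z, hnonneg z hz y hy]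

lemma continuousOn_breg {s : Set ℝ} (hφ : ContinuousOn φ s) (hφ' : ContinuousOn φ' s) (x : ℝ) :
    ContinuousOn (breg φ φ' x) s :=
  (continuousOn_const.sub hφ).sub (hφ'.mul (by fun_prop))

lemma hasDerivWithinAt_breg_self {s : Set ℝ} {x : ℝ} (hφ : HasDerivWithinAt φ (φ' x) s x)
    (hφ' : ContinuousWithinAt φ' s x) : HasDerivWithinAt (breg φ φ' x) 0 s x := by
  -- `φ'` is only continuous at `x`, so the product rule does not apply.
  rw [hasDerivWithinAt_iff_tendsto_slope] at hφ ⊢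
  have h := (hφ'.mono (sdiff_subset (t := {x}))).tendsto.sub hφ
  rw [sub_self] at h
  refine h.congr' ?_
  filter_upwards [self_mem_nhdsWithin] with y hy
  have hyx : y - x ≠ 0 := sub_ne_zero.2 hy.2
  simp only [slope_def_field, breg]
  field_simp
  ring

lemma breg_nonneg_of_convexOn_of_lt {s : Set ℝ} {x y : ℝ} (hx : x ∈ s) (hy : y ∈ s) (hxy : x < y)
    (hφ : HasDerivWithinAt φ (φ' x) s x) (hφ' : ContinuousWithinAt φ' s x)
    (hconv : ConvexOn ℝ s (breg φ φ' x)) : 0 ≤ breg φ φ' x y := by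
  have h := hconv.le_slope_of_hasDerivWithinAt hx hy hxy (hasDerivWithinAt_breg_self hφ hφ')
  rw [slope_def_field, le_div_iff₀ (sub_pos.2 hxy)] at h
  simpa [breg] using h

lemma hasDerivWithinAt_slope {s : Set ℝ} {x y : ℝ} (hxy : x ≠ y)
    (hφ : HasDerivWithinAt φ (φ' y) s y) :
    HasDerivWithinAt (slope φ x) (breg φ φ' x y / (y - x) ^ 2) s y := by
  have h := (hφ.sub_const (φ x)).div ((hasDerivWithinAt_id y s).sub_const x)
    (sub_ne_zero.2 hxy.symm)
  rw [show slope φ x = fun z => (φ z - φ x) / (z - x) from funext (slope_def_field φ x)]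
  refine h.congr_deriv ?_
  simp only [breg, id_eq]
  ring

lemma breg_swap_nonneg {a b : ℝ} (hab : a < b)
    (hφ : ∀ y ∈ Set.Icc a b, HasDerivWithinAt φ (φ' y) (Set.Icc a b) y)
    (hnonneg : ∀ y ∈ Set.Ioo a b, 0 ≤ breg φ φ' a y) : 0 ≤ breg φ φ' b a := by
  have hslope : ∀ y ∈ Set.Ioc a b,
      HasDerivWithinAt (slope φ a) (breg φ φ' a y / (y - a) ^ 2) (Set.Ioc a b) y := fun y hy =>
    hasDerivWithinAt_slope hy.1.ne
      ((hφ y (Set.Ioc_subset_Icc_self hy)).mono Set.Ioc_subset_Icc_self)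
  have hmono : MonotoneOn (slope φ a) (Set.Ioc a b) := by
    refine monotoneOn_of_hasDerivWithinAt_nonneg (f' := fun y => breg φ φ' a y / (y - a) ^ 2)
      (convex_Ioc a b) (fun y hy => (hslope y hy).continuousWithinAt) ?_ ?_
    · exact fun y hy => (hslope y (interior_subset hy)).mono interior_subset
    · intro y hy
      rw [interior_Ioc] at hy
      exact div_nonneg (hnonneg y hy) (sq_nonneg _)
  have hle : φ' a ≤ slope φ a b := by
    have hlim := hasDerivWithinAt_iff_tendsto_slope.1 (hφ a (Set.left_mem_Icc.2 hab.le))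
    rw [Set.Icc_sdiff_left] at hlim
    have : (nhdsWithin a (Set.Ioc a b)).NeBot := by
      rw [nhdsWithin_Ioc_eq_nhdsGT hab]
      infer_instance
    refine le_of_tendsto hlim ?_
    filter_upwards [self_mem_nhdsWithin] with y hy
    exact hmono hy (Set.right_mem_Ioc.2 hab) hy.2
  rw [slope_def_field, le_div_iff₀ (sub_pos.2 hab)] at hle
  exact sub_nonneg.2 hle

lemma breg_nonneg_of_convexOn_Icc {a b : ℝ}
    (hφ : ∀ y ∈ Set.Icc a b, HasDerivWithinAt φ (φ' y) (Set.Icc a b) y)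
    (hφ' : ContinuousOn φ' (Set.Icc a b))
    (hconv : ∀ x ∈ Set.Icc a b, ConvexOn ℝ (Set.Icc x b) (breg φ φ' x)) :
    ∀ x ∈ Set.Icc a b, ∀ y ∈ Set.Icc a b, 0 ≤ breg φ φ' x y := by
  have hright : ∀ x ∈ Set.Icc a b, ∀ y ∈ Set.Icc a b, x < y → 0 ≤ breg φ φ' x y := by
    intro x hx y hy hxy
    have hsub : Set.Icc x b ⊆ Set.Icc a b := Set.Icc_subset_Icc_left hx.1
    exact breg_nonneg_of_convexOn_of_lt (Set.left_mem_Icc.2 hx.2) ⟨hxy.le, hy.2⟩ hxy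
      ((hφ x hx).mono hsub) ((hφ' x hx).mono hsub) (hconv x hx)
  intro x hx y hy
  rcases lt_trichotomy x y with hxy | rfl | hyx
  · exact hright x hx y hy hxy
  · simp [breg]
  · have hsub : Set.Icc y x ⊆ Set.Icc a b := Set.Icc_subset_Icc hy.1 hx.2
    exact breg_swap_nonneg hyx (fun z hz => (hφ z (hsub hz)).mono hsub)
      fun z hz => hright y hy z (hsub (Set.Ioo_subset_Icc_self hz)) hz.1

end Bregman

section SimplexFace

variable {ι : Type*} [Fintype ι]

/-- The face of the standard simplex spanned by the vertices in `S`: probability vectors on `ι`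
vanishing outside `S`, which encode `Δ_S` by extension with zero. -/
def simplexFace (S : Finset ι) : Set (ι → ℝ) := {q | q ∈ stdSimplex ℝ ι ∧ ∀ i ∉ S, q i = 0}

/-- The infimum of the separable cost `∑ i, f i (q i)` over the face of the simplex spanned by `S`.
Coordinates outside `S` contribute `f i 0`; for empty `S` the value is the junk `sInf ∅ = 0`. -/
noncomputable def faceInf (f : ι → ℝ → ℝ) (S : Finset ι) : ℝ :=
  sInf ((fun q => ∑ i, f i (q i)) '' simplexFace S)

variable {S T : Finset ι} {p : ι → ℝ} {f : ι → ℝ → ℝ}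

lemma mem_Icc_of_mem_simplexFace {q : ι → ℝ} (hq : q ∈ simplexFace S) (i : ι) :
    q i ∈ Set.Icc (0 : ℝ) 1 :=
  mem_Icc_of_mem_stdSimplex hq.1 i

lemma sum_eq_one_of_mem_simplexFace {q : ι → ℝ} (hq : q ∈ simplexFace S) :
    ∑ i ∈ S, q i = 1 := by
  rw [Finset.sum_subset (Finset.subset_univ S) fun i _ hi => hq.2 i hi]
  exact hq.1.2

lemma simplexFace_mono (hST : S ⊆ T) : simplexFace S ⊆ simplexFace T := fun _ hq =>
  ⟨hq.1, fun i hi => hq.2 i fun hiS => hi (hST hiS)⟩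

lemma simplexFace_nonempty (hS : S.Nonempty) : (simplexFace S).Nonempty := by
  classical
  obtain ⟨j, hj⟩ := hS
  exact ⟨Pi.single j 1, single_mem_stdSimplex ℝ j, fun i hi =>
    Pi.single_eq_of_ne (ne_of_mem_of_not_mem hj hi).symm 1⟩

lemma exists_mem_simplexFace_ge (hp0 : ∀ i, 0 ≤ p i) (hp1 : ∑ i, p i ≤ 1) {q : ι → ℝ}
    (hq : q ∈ simplexFace S) :
    ∃ x ∈ simplexFace S, ∀ i ∈ S, x i ∈ Set.Icc (p i) (p i ⊔ q i) := by
  classical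
  have hpS : ∑ i ∈ S, p i ≤ 1 :=
    (Finset.sum_le_univ_sum_of_nonneg hp0).trans hp1
  have hmaxS : 1 ≤ ∑ i ∈ S, (p i ⊔ q i) := by
    rw [← sum_eq_one_of_mem_simplexFace hq]
    exact Finset.sum_le_sum fun i _ => le_sup_right
  obtain ⟨α, β, hα, hβ, hαβ, hmass⟩ :
      (1 : ℝ) ∈ segment ℝ (∑ i ∈ S, p i) (∑ i ∈ S, (p i ⊔ q i)) := by
    rw [segment_eq_Icc (hpS.trans hmaxS)]
    exact ⟨hpS, hmaxS⟩
  let x : ι → ℝ := fun i => if i ∈ S then α * p i + β * (p i ⊔ q i) else 0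
  have hx : ∀ i ∈ S, x i ∈ Set.Icc (p i) (p i ⊔ q i) := fun i hi => by
    rw [← segment_eq_Icc le_sup_left]
    exact ⟨α, β, hα, hβ, hαβ, (if_pos hi).symm⟩
  refine ⟨x, ⟨⟨fun i => ?_, ?_⟩, fun i hi => if_neg hi⟩, hx⟩
  · by_cases hi : i ∈ S
    · exact (hp0 i).trans (hx i hi).1
    · exact (if_neg hi).ge
  · rw [← hmass, smul_eq_mul, smul_eq_mul, Finset.mul_sum, Finset.mul_sum,
      ← Finset.sum_add_distrib]
    simp only [x, Finset.sum_ite_mem, Finset.univ_inter]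

lemma faceInf_le (hmin : ∀ i, ∀ y ∈ Set.Icc (0 : ℝ) 1, f i (p i) ≤ f i y) {q : ι → ℝ}
    (hq : q ∈ simplexFace S) : faceInf f S ≤ ∑ i, f i (q i) := by
  refine csInf_le ⟨∑ i, f i (p i), ?_⟩ (Set.mem_image_of_mem _ hq)
  rintro _ ⟨x, hx, rfl⟩
  exact Finset.sum_le_sum fun i _ => hmin i _ (mem_Icc_of_mem_simplexFace hx i)

lemma le_faceInf (hS : S.Nonempty) {c : ℝ} (hc : ∀ q ∈ simplexFace S, c ≤ ∑ i, f i (q i)) :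
    c ≤ faceInf f S :=
  le_csInf ((simplexFace_nonempty hS).image _) (Set.forall_mem_image.2 hc)

lemma exists_mem_simplexFace_ge_sum_le (hp0 : ∀ i, 0 ≤ p i) (hp1 : ∑ i, p i ≤ 1)
    (hunimodal : ∀ i, ∀ y ∈ Set.Icc (0 : ℝ) 1, ∀ z ∈ Set.uIcc (p i) y, f i z ≤ f i y) {q : ι → ℝ}
    (hq : q ∈ simplexFace S) :
    ∃ x ∈ simplexFace S, (∀ i ∈ S, p i ≤ x i) ∧ ∑ i, f i (x i) ≤ ∑ i, f i (q i) := by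
  obtain ⟨x, hx, hxp⟩ := exists_mem_simplexFace_ge hp0 hp1 hq
  refine ⟨x, hx, fun i hi => (hxp i hi).1, Finset.sum_le_sum fun i _ => ?_⟩
  by_cases hi : i ∈ S
  · exact hunimodal i _ (mem_Icc_of_mem_simplexFace hq i) _
      (Set.Icc_subset_Icc_left inf_le_left (hxp i hi))
  · rw [hx.2 i hi, hq.2 i hi]

end SimplexFace

section Exchange

variable {ι : Type*} [DecidableEq ι] {S : Finset ι} {a b : ι} {f : ι → ℝ → ℝ}
  {p q r : ι → ℝ} {t : ℝ}

/-- The mixture `(1 - t) q + t r` with its mass at `b` moved to `a`. -/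
def mergedMix (a b : ι) (t : ℝ) (q r : ι → ℝ) : ι → ℝ := fun i =>
  if i = b then 0
  else if i = a then (1 - t) * (q a + q b) + t * (r a + r b)
  else (1 - t) * q i + t * r i

lemma mergedMix_right : mergedMix a b t q r b = 0 := if_pos rfl

lemma mergedMix_left (hab : a ≠ b) :
    mergedMix a b t q r a = (1 - t) * (q a + q b) + t * (r a + r b) := by
  rw [mergedMix, if_neg hab, if_pos rfl]

lemma mergedMix_of_ne {i : ι} (ha : i ≠ a) (hb : i ≠ b) :
    mergedMix a b t q r i = (1 - t) * q i + t * r i := by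
  rw [mergedMix, if_neg hb, if_neg ha]

variable [Fintype ι]

lemma sum_eq_add_add_sum_sdiff_pair (hab : a ≠ b) (g : ι → ℝ) :
    ∑ i, g i = g a + g b + ∑ i ∈ Finset.univ \ {a, b}, g i := by
  rw [← Finset.sum_sdiff (Finset.subset_univ {a, b}), Finset.sum_pair hab, add_comm]

lemma sum_mergedMix (hab : a ≠ b) :
    ∑ i, mergedMix a b t q r i = (1 - t) * ∑ i, q i + t * ∑ i, r i := by
  have hrest : ∑ i ∈ Finset.univ \ {a, b}, mergedMix a b t q r i =
      (1 - t) * ∑ i ∈ Finset.univ \ {a, b}, q i + t * ∑ i ∈ Finset.univ \ {a, b}, r i := by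
    rw [Finset.mul_sum, Finset.mul_sum, ← Finset.sum_add_distrib]
    refine Finset.sum_congr rfl fun i hi => ?_
    obtain ⟨hia, hib⟩ : i ≠ a ∧ i ≠ b := by simpa using hi
    exact mergedMix_of_ne hia hib
  rw [sum_eq_add_add_sum_sdiff_pair hab (mergedMix a b t q r), hrest, mergedMix_right,
    mergedMix_left hab, sum_eq_add_add_sum_sdiff_pair hab q, sum_eq_add_add_sum_sdiff_pair hab r]
  ring

lemma mergedMix_mem_simplexFace (hab : a ≠ b) (hq : q ∈ simplexFace (insert b (insert a S)))
    (hr : r ∈ simplexFace (insert b (insert a S))) (ht : t ∈ Set.Icc (0 : ℝ) 1) :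
    mergedMix a b t q r ∈ simplexFace (insert a S) := by
  have mix_nonneg : ∀ {y z : ℝ}, 0 ≤ y → 0 ≤ z → 0 ≤ (1 - t) * y + t * z := fun hy hz =>
    add_nonneg (mul_nonneg (sub_nonneg.2 ht.2) hy) (mul_nonneg ht.1 hz)
  refine ⟨⟨fun i => ?_, ?_⟩, fun i hi => ?_⟩
  · unfold mergedMix
    split_ifs
    · exact le_rfl
    · exact mix_nonneg (add_nonneg (hq.1.1 a) (hq.1.1 b)) (add_nonneg (hr.1.1 a) (hr.1.1 b))
    · exact mix_nonneg (hq.1.1 i) (hr.1.1 i)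
  · rw [sum_mergedMix hab, hq.1.2, hr.1.2]
    ring
  · by_cases hb : i = b
    · rw [hb, mergedMix_right]
    · have ha : i ≠ a := (ne_of_mem_of_not_mem (Finset.mem_insert_self a S) hi).symm
      have hi' : i ∉ insert b (insert a S) := by simp [hb, hi]
      rw [mergedMix_of_ne ha hb, hq.2 i hi', hr.2 i hi', mul_zero, mul_zero, add_zero]

lemma sum_mergedMix_add_sum_mergedMix_le (haS : a ∉ S) (hb : b ∉ insert a S)
    (hconv : ∀ i ∈ S, ConvexOn ℝ (Set.Icc (p i) 1) (f i))
    (hexch : ∀ y ∈ Set.Icc (0 : ℝ) 1, f a y - f a 0 ≤ f b y - f b 0)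
    (hq : q ∈ simplexFace (insert b (insert a S))) (hr : r ∈ simplexFace S)
    (hqp : ∀ i ∈ S, p i ≤ q i) (hrp : ∀ i ∈ S, p i ≤ r i)
    (ht : t ∈ Set.Icc (0 : ℝ) 1) (htq : t * (q a + q b) = q b) :
    ∑ i, f i (mergedMix a b t q r i) + ∑ i, f i (mergedMix a b (1 - t) q r i) ≤
      ∑ i, f i (q i) + ∑ i, f i (r i) := by
  have hab : a ≠ b := ne_of_mem_of_not_mem (Finset.mem_insert_self a S) hb
  have hra : r a = 0 := hr.2 a haS
  have hrb : r b = 0 := hr.2 b fun h => hb (Finset.mem_insert_of_mem h)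
  have hu : mergedMix a b t q r a = q a := by
    rw [mergedMix_left hab, hra, hrb]
    linarith
  have hv : mergedMix a b (1 - t) q r a = q b := by
    rw [mergedMix_left hab, hra, hrb]
    linarith
  have hrest : ∑ i ∈ Finset.univ \ {a, b},
        (f i (mergedMix a b t q r i) + f i (mergedMix a b (1 - t) q r i)) ≤
      ∑ i ∈ Finset.univ \ {a, b}, (f i (q i) + f i (r i)) := by
    refine Finset.sum_le_sum fun i hi => ?_
    obtain ⟨hia, hib⟩ : i ≠ a ∧ i ≠ b := by simpa using hi
    rw [mergedMix_of_ne hia hib, mergedMix_of_ne hia hib, sub_sub_cancel]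
    by_cases hiS : i ∈ S
    · exact add_map_mix_le_of_convexOn (hconv i hiS)
        ⟨hqp i hiS, (mem_Icc_of_mem_simplexFace hq i).2⟩
        ⟨hrp i hiS, (mem_Icc_of_mem_simplexFace hr i).2⟩ ht
    · have hqi : q i = 0 := hq.2 i (by simp [hia, hib, hiS])
      simp [hqi, hr.2 i hiS]
  have hswap := hexch (q b) (mem_Icc_of_mem_simplexFace hq b)
  rw [← Finset.sum_add_distrib, ← Finset.sum_add_distrib, sum_eq_add_add_sum_sdiff_pair hab,
    sum_eq_add_add_sum_sdiff_pair hab (fun i => f i (q i) + f i (r i))]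
  simp only [mergedMix_right, hu, hv, hra, hrb]
  linarith

theorem two_mul_faceInf_insert_le (hS : S.Nonempty) (haS : a ∉ S) (hb : b ∉ insert a S)
    (hp0 : ∀ i, 0 ≤ p i) (hp1 : ∑ i, p i ≤ 1)
    (hunimodal : ∀ i, ∀ y ∈ Set.Icc (0 : ℝ) 1, ∀ z ∈ Set.uIcc (p i) y, f i z ≤ f i y)
    (hconv : ∀ i ∈ S, ConvexOn ℝ (Set.Icc (p i) 1) (f i))
    (hexch : ∀ y ∈ Set.Icc (0 : ℝ) 1, f a y - f a 0 ≤ f b y - f b 0) :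
    2 * faceInf f (insert a S) ≤ faceInf f (insert b (insert a S)) + faceInf f S := by
  have hmin : ∀ i, ∀ y ∈ Set.Icc (0 : ℝ) 1, f i (p i) ≤ f i y := fun i y hy =>
    hunimodal i y hy _ Set.left_mem_uIcc
  have hSab : S ⊆ insert b (insert a S) :=
    (Finset.subset_insert a S).trans (Finset.subset_insert b _)
  suffices hqr : ∀ q ∈ simplexFace (insert b (insert a S)), ∀ r ∈ simplexFace S,
      2 * faceInf f (insert a S) ≤ ∑ i, f i (q i) + ∑ i, f i (r i) by
    refine sub_le_iff_le_add.1 (le_faceInf (hS.mono hSab) fun q hq => ?_)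
    refine sub_le_comm.1 (le_faceInf hS fun r hr => ?_)
    exact sub_le_iff_le_add'.2 (hqr q hq r hr)
  intro q₀ hq₀ r₀ hr₀
  obtain ⟨q, hq, hqp, hqq₀⟩ := exists_mem_simplexFace_ge_sum_le hp0 hp1 hunimodal hq₀
  obtain ⟨r, hr, hrp, hrr₀⟩ := exists_mem_simplexFace_ge_sum_le hp0 hp1 hunimodal hr₀
  have hqa := hq.1.1 a
  have hqb := hq.1.1 b
  obtain ⟨t, ht, htq⟩ : ∃ t ∈ Set.Icc (0 : ℝ) 1, t * (q a + q b) = q b := by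
    refine ⟨q b / (q a + q b), ⟨by positivity, div_le_one_of_le₀ (by linarith) (by positivity)⟩,
      div_mul_cancel_of_imp fun h => by linarith⟩
  have hab : a ≠ b := ne_of_mem_of_not_mem (Finset.mem_insert_self a S) hb
  have hr' := simplexFace_mono hSab hr
  have hu := faceInf_le hmin (mergedMix_mem_simplexFace hab hq hr' ht)
  have hv := faceInf_le hmin (mergedMix_mem_simplexFace hab hq hr' (t := 1 - t)
    ⟨sub_nonneg.2 ht.2, sub_le_self 1 ht.1⟩)
  linarith [sum_mergedMix_add_sum_mergedMix_le haS hb hconv hexch hq hr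
    (fun i hi => hqp i (hSab hi)) hrp ht htq]

end Exchange

section DualCost

variable {V : ℕ} {φ φ' : ℝ → ℝ}

lemma dualTopLoss_eq_faceInf (p : Fin V → ℝ) (n : ℕ) :
    dualTopLoss φ φ' p n =
      faceInf (fun i => breg φ φ' (p i)) (Finset.univ.filter fun i : Fin V => (i : ℕ) < n) := by
  unfold dualTopLoss faceInf
  congr 1
  ext c
  constructor
  · rintro ⟨q, hq, hq1, rfl⟩
    refine ⟨fun i => if (i : ℕ) < n then q i else 0, ⟨⟨fun i => ?_, ?_⟩, fun i hi => ?_⟩, ?_⟩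
    · dsimp only
      split_ifs
      exacts [(hq i).1, le_rfl]
    · rwa [← Finset.sum_filter]
    · exact if_neg (by simpa using hi)
    · simp only [apply_ite (breg φ φ' _), Finset.sum_ite, not_lt]
  · rintro ⟨q, hq, rfl⟩
    refine ⟨q, mem_Icc_of_mem_simplexFace hq, sum_eq_one_of_mem_simplexFace hq, ?_⟩
    dsimp only
    rw [← Finset.sum_filter_add_sum_filter_not Finset.univ (fun i : Fin V => (i : ℕ) < n)]
    simp only [not_lt]
    congr 1
    refine Finset.sum_congr rfl fun i hi => ?_
    rw [hq.2 i (by simpa using hi)]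

lemma filter_val_lt_succ {n : ℕ} (hn : n < V) :
    (Finset.univ.filter fun i : Fin V => (i : ℕ) < n + 1) =
      insert ⟨n, hn⟩ (Finset.univ.filter fun i : Fin V => (i : ℕ) < n) := by
  ext i
  simp only [Finset.mem_filter, Finset.mem_univ, true_and, Finset.mem_insert, Fin.ext_iff]
  omega

lemma two_mul_dualTopLoss_le {p : Fin V → ℝ} (hp0 : ∀ i, 0 ≤ p i) (hp1 : ∑ i, p i ≤ 1)
    (hp : Antitone p)
    (hnonneg : ∀ x ∈ Set.Icc (0 : ℝ) 1, ∀ y ∈ Set.Icc (0 : ℝ) 1, 0 ≤ breg φ φ' x y)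
    (hconv : ∀ x ∈ Set.Icc (0 : ℝ) 1, ConvexOn ℝ (Set.Icc x 1) (breg φ φ' x))
    {n : ℕ} (hn : 0 < n) (hnV : n + 1 < V) :
    2 * dualTopLoss φ φ' p (n + 1) ≤ dualTopLoss φ φ' p (n + 2) + dualTopLoss φ φ' p n := by
  have hpI : ∀ i, p i ∈ Set.Icc (0 : ℝ) 1 := fun i =>
    ⟨hp0 i, (Finset.single_le_sum (fun j _ => hp0 j) (Finset.mem_univ i)).trans hp1⟩
  simp only [dualTopLoss_eq_faceInf]
  rw [filter_val_lt_succ hnV, filter_val_lt_succ (n.lt_succ_self.trans hnV)]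
  refine two_mul_faceInf_insert_le (p := p) ⟨⟨0, by omega⟩, by simpa using hn⟩ (by simp)
    (by simp) hp0 hp1 ?_ (fun i _ => hconv (p i) (hpI i)) ?_
  · intro i y hy z hz
    exact breg_le_breg_of_mem_uIcc hnonneg hy (Set.ordConnected_Icc.uIcc_subset (hpI i) hy hz) hz
  · intro y hy
    refine breg_sub_breg_le_of_le (hp (Fin.mk_le_mk.2 n.le_succ)) ?_
    exact monotoneOn_of_breg_nonneg hnonneg (Set.left_mem_Icc.2 zero_le_one) hy hy.1

theorem dual_cost_discretely_convex_general {p : Fin V → ℝ} (hp0 : ∀ i, 0 ≤ p i)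
    (hp1 : ∑ i, p i ≤ 1) (hp : Antitone p)
    (hφ : ∀ t ∈ Set.Icc (0 : ℝ) 1, HasDerivWithinAt φ (φ' t) (Set.Icc 0 1) t)
    (hφ' : ContinuousOn φ' (Set.Icc 0 1))
    (hconv : ∀ t ∈ Set.Ioc (0 : ℝ) 1, ConvexOn ℝ (Set.Icc t 1) (breg φ φ' t))
    (hconv0 : ConvexOn ℝ (Set.Ioc 0 1) (breg φ φ' 0))
    (lam : ℝ) {k : ℕ} (hk : 2 ≤ k) (hkV : k + 1 ≤ V) :
    0 ≤ dualCost φ φ' p lam (k + 1) - 2 * dualCost φ φ' p lam k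
        + dualCost φ φ' p lam (k - 1) := by
  have hφc : ContinuousOn φ (Set.Icc 0 1) := fun t ht => (hφ t ht).continuousWithinAt
  have hconvIcc : ∀ t ∈ Set.Icc (0 : ℝ) 1, ConvexOn ℝ (Set.Icc t 1) (breg φ φ' t) := by
    intro t ht
    rcases ht.1.eq_or_lt with rfl | hpos
    · have hc := continuousOn_breg hφc hφ' 0
      rw [← closure_Ioc zero_ne_one] at hc ⊢
      exact convexOn_closure hconv0 hc
    · exact hconv t ⟨hpos, ht.2⟩
  obtain ⟨n, rfl⟩ : ∃ n, k = n + 1 := Nat.exists_eq_add_of_le' (one_le_two.trans hk)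
  have hloss := two_mul_dualTopLoss_le hp0 hp1 hp
    (breg_nonneg_of_convexOn_Icc hφ hφ' hconvIcc) hconvIcc (Nat.le_of_succ_le_succ hk) hkV
  unfold dualCost
  push_cast [Nat.add_sub_cancel]
  linarith

end DualCost

/-- Discrete convexity of the dual cost. For `V ≥ 3`, `p ∈ Δ_V` sorted in
non-increasing order, a dual valid `φ` that is continuously differentiable on `[0,1]`
with `φ'(0) = 0`, and `λ ≥ 0`, the regularized dual cost satisfies
`cost*(k+1) − 2·cost*(k) + cost*(k−1) ≥ 0` for every `k ∈ {2,…,V−1}`. -/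
theorem dual_cost_discretely_convex
    (V : ℕ) (hV : 3 ≤ V)
    (p : Fin V → ℝ) (hp0 : ∀ i, p i ∈ Set.Icc (0:ℝ) 1) (hp1 : (∑ i, p i) = 1)
    (hsorted : ∀ i j : Fin V, i ≤ j → p j ≤ p i)
    (φ φ' φ'' φ''' : ℝ → ℝ)
    (hd1 : ∀ t ∈ Set.Ioc (0:ℝ) 1, HasDerivWithinAt φ (φ' t) (Set.Ioc 0 1) t)
    (hd2 : ∀ t ∈ Set.Ioc (0:ℝ) 1, HasDerivWithinAt φ' (φ'' t) (Set.Ioc 0 1) t)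
    (hd3 : ∀ t ∈ Set.Ioc (0:ℝ) 1, HasDerivWithinAt φ'' (φ''' t) (Set.Ioc 0 1) t)
    (hlim : Filter.Tendsto (fun t => t * φ'' t) (nhdsWithin 0 (Set.Ioi 0)) (nhds 0))
    (hsc1 : ∀ t ∈ Set.Ioc (0:ℝ) 1, StrictConvexOn ℝ (Set.Icc t 1) (fun y => breg φ φ' t y))
    (hsc2 : StrictConvexOn ℝ (Set.Ioc 0 1) (fun y => breg φ φ' 0 y))
    (hC1 : ∀ t ∈ Set.Icc (0:ℝ) 1, HasDerivWithinAt φ (φ' t) (Set.Icc 0 1) t)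
    (hC1cont : ContinuousOn φ' (Set.Icc 0 1))
    (hφ'0 : φ' 0 = 0)
    (lam : ℝ) (hlam : 0 ≤ lam)
    (k : ℕ) (hk2 : 2 ≤ k) (hkV : k + 1 ≤ V) :
    0 ≤ dualCost φ φ' p lam (k + 1) - 2 * dualCost φ φ' p lam k
        + dualCost φ φ' p lam (k - 1) := by
  exact dual_cost_discretely_convex_general (fun i => (hp0 i).1) hp1.le (fun i j => hsorted i j)
    hC1 hC1cont (fun t ht => (hsc1 t ht).convexOn) hsc2.convexOn lam hk2 hkV
end

section
/- Let φ : [0,1] → ℝ be a dual valid generator, let p ∈ (0,1], let ν > 0, and let y* ∈ [p,1] satisfy φ''(y*)·(y* − p) = ν. Then the function ψ(x) := ν·x − d_φ(p, x) is nondecreasing on the interval (0, y*]: its derivative ν − φ''(x)·(x − p) is ≥ 0 for all x ∈ (0, y*], because φ''(x)(x − p) ≤ 0 for x ≤ p, while for p ≤ x ≤ y* the map y ↦ φ''(y)(y − p) is nondecreasing on [p,1] by the second-argument convexity of d_φ(p,·), so φ''(x)(x − p) ≤ φ''(y*)(y* − p) = ν. -/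
/-!
The derivative of `y ↦ d_φ(t, y)` is `φ''(y)(y - t)`, so convexity of `d_φ(t, ·)` to the right of
`t` makes `y ↦ φ''(y)(y - t)` nondecreasing there. Its value at `t` is `0`, hence `φ'' ≥ 0` to the
right of `t`, so `φ'` is nondecreasing there and `φ''(t) ≥ 0` as well. Consequently
`φ''(x)(x - p) ≤ 0` for `x ≤ p`, while for `p ≤ x ≤ y*` the case `t = p` gives
`φ''(x)(x - p) ≤ φ''(y*)(y* - p) = ν`. Thus `ψ' ≥ 0` up to `y*`.
-/

open Set Filter

lemma monotoneOn_of_convexOn_of_hasDerivWithinAt {f f' : ℝ → ℝ} {s : Set ℝ}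
    (hf : ConvexOn ℝ s f) (hf' : ∀ x ∈ s, HasDerivWithinAt f (f' x) s x) :
    MonotoneOn f' s := by
  intro x hx y hy hxy
  rcases hxy.eq_or_lt with rfl | hlt
  · exact le_rfl
  · calc f' x ≤ slope f x y := hf.le_slope_of_hasDerivWithinAt hx hy hlt (hf' x hx)
      _ ≤ f' y := hf.slope_le_of_hasDerivWithinAt hx hy hlt (hf' y hy)

section Bregman

variable {φ φ' φ'' : ℝ → ℝ} {s : Set ℝ} {t p ν : ℝ}

lemma hasDerivWithinAt_breg {y c : ℝ} (t : ℝ) (hφ : HasDerivWithinAt φ (φ' y) s y)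
    (hφ' : HasDerivWithinAt φ' c s y) :
    HasDerivWithinAt (breg φ φ' t) (c * (y - t)) s y :=
  ((hφ.const_sub (φ t)).sub (hφ'.mul ((hasDerivWithinAt_id y s).const_sub t))).congr_deriv <| by
    simp only [id]
    ring

lemma monotoneOn_breg_deriv (hφ : ∀ y ∈ s, HasDerivWithinAt φ (φ' y) s y)
    (hφ' : ∀ y ∈ s, HasDerivWithinAt φ' (φ'' y) s y) (hconv : ConvexOn ℝ s (breg φ φ' t)) :
    MonotoneOn (fun y => φ'' y * (y - t)) s :=
  monotoneOn_of_convexOn_of_hasDerivWithinAt hconv fun y hy =>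
    hasDerivWithinAt_breg t (hφ y hy) (hφ' y hy)

lemma second_deriv_nonneg_of_convexOn_breg (hφ : ∀ y ∈ s, HasDerivWithinAt φ (φ' y) s y)
    (hφ' : ∀ y ∈ s, HasDerivWithinAt φ' (φ'' y) s y) (hconv : ConvexOn ℝ s (breg φ φ' t))
    (ht : IsLeast s t) (hs : s.Nontrivial) : 0 ≤ φ'' t := by
  have nonneg_right : ∀ y ∈ s, t < y → 0 ≤ φ'' y := by
    intro y hy hty
    have hprod : φ'' t * (t - t) ≤ φ'' y * (y - t) :=
      monotoneOn_breg_deriv hφ hφ' hconv ht.1 hy hty.le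
    rw [sub_self, mul_zero] at hprod
    exact nonneg_of_mul_nonneg_left hprod (sub_pos.2 hty)
  have lt_of_interior : ∀ y ∈ interior s, t < y := fun y hy =>
    interior_Ici.subset (interior_mono (fun _ hz => ht.2 hz) hy)
  have hmono : MonotoneOn φ' s :=
    monotoneOn_of_hasDerivWithinAt_nonneg hconv.1 (fun y hy => (hφ' y hy).continuousWithinAt)
      (fun y hy => (hφ' y (interior_subset hy)).mono interior_subset)
      (fun y hy => nonneg_right y (interior_subset hy) (lt_of_interior y hy))
  have hacc : AccPt t (𝓟 s) := hconv.1.isPreconnected.preperfect_of_nontrivial hs t ht.1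
  exact (hφ' t ht.1).nonneg_of_monotoneOn hacc hmono

lemma breg_deriv_le_of_le {x y : ℝ} (hφ : ∀ t ∈ s, HasDerivWithinAt φ (φ' t) s t)
    (hφ' : ∀ t ∈ s, HasDerivWithinAt φ' (φ'' t) s t)
    (hconv : ∀ t ∈ s, ConvexOn ℝ (s ∩ Ici t) (breg φ φ' t))
    (hp : p ∈ s) (hx : x ∈ s) (hy : y ∈ s) (hpy : p ≤ y) (hxy : x ≤ y) :
    φ'' x * (x - p) ≤ φ'' y * (y - p) := by
  have hφr : ∀ t, ∀ z ∈ s ∩ Ici t, HasDerivWithinAt φ (φ' z) (s ∩ Ici t) z :=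
    fun _ z hz => (hφ z hz.1).mono inter_subset_left
  have hφr' : ∀ t, ∀ z ∈ s ∩ Ici t, HasDerivWithinAt φ' (φ'' z) (s ∩ Ici t) z :=
    fun _ z hz => (hφ' z hz.1).mono inter_subset_left
  have hmono : MonotoneOn (fun z => φ'' z * (z - p)) (s ∩ Ici p) :=
    monotoneOn_breg_deriv (hφr p) (hφr' p) (hconv p hp)
  rcases lt_or_ge x p with hxp | hpx
  · have hnonneg : 0 ≤ φ'' x :=
      second_deriv_nonneg_of_convexOn_breg (hφr x) (hφr' x) (hconv x hx)
        ⟨⟨hx, self_mem_Ici⟩, fun _ hz => hz.2⟩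
        ⟨x, ⟨hx, self_mem_Ici⟩, p, ⟨hp, hxp.le⟩, hxp.ne⟩
    calc φ'' x * (x - p) ≤ 0 := mul_nonpos_of_nonneg_of_nonpos hnonneg (sub_nonpos.2 hxp.le)
      _ = φ'' p * (p - p) := by rw [sub_self, mul_zero]
      _ ≤ φ'' y * (y - p) := hmono ⟨hp, self_mem_Ici⟩ ⟨hy, hpy⟩ hpy
  · exact hmono ⟨hx, hpx⟩ ⟨hy, hpy⟩ hxy

lemma monotoneOn_mul_sub_breg (hs : Convex ℝ s) (hφ : ∀ x ∈ s, HasDerivWithinAt φ (φ' x) s x)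
    (hφ' : ∀ x ∈ s, HasDerivWithinAt φ' (φ'' x) s x)
    (hν : ∀ x ∈ s, 0 ≤ ν - φ'' x * (x - p)) :
    MonotoneOn (fun x => ν * x - breg φ φ' p x) s := by
  have hderiv : ∀ x ∈ s, HasDerivWithinAt (fun x => ν * x - breg φ φ' p x)
      (ν - φ'' x * (x - p)) s x := fun x hx =>
    (hasDerivAt_const_mul ν).hasDerivWithinAt.sub (hasDerivWithinAt_breg p (hφ x hx) (hφ' x hx))
  exact monotoneOn_of_hasDerivWithinAt_nonneg hs (fun x hx => (hderiv x hx).continuousWithinAt)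
    (fun x hx => (hderiv x (interior_subset hx)).mono interior_subset)
    (fun x hx => hν x (interior_subset hx))

theorem dual_helper_psi_monotone_general {ystar : ℝ} (hs : Convex ℝ s)
    (hφ : ∀ t ∈ s, HasDerivWithinAt φ (φ' t) s t)
    (hφ' : ∀ t ∈ s, HasDerivWithinAt φ' (φ'' t) s t)
    (hconv : ∀ t ∈ s, ConvexOn ℝ (s ∩ Ici t) (breg φ φ' t))
    (hp : p ∈ s) (hystar : ystar ∈ s) (hpy : p ≤ ystar) (hν : φ'' ystar * (ystar - p) ≤ ν) :
    (∀ x ∈ s ∩ Iic ystar, 0 ≤ ν - φ'' x * (x - p)) ∧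
    MonotoneOn (fun x => ν * x - breg φ φ' p x) (s ∩ Iic ystar) := by
  have hnonneg : ∀ x ∈ s ∩ Iic ystar, 0 ≤ ν - φ'' x * (x - p) := fun x hx =>
    sub_nonneg.2 ((breg_deriv_le_of_le hφ hφ' hconv hp hx.1 hystar hpy hx.2).trans hν)
  exact ⟨hnonneg, monotoneOn_mul_sub_breg (hs.inter (convex_Iic ystar))
    (fun x hx => (hφ x hx.1).mono inter_subset_left)
    (fun x hx => (hφ' x hx.1).mono inter_subset_left) hnonneg⟩

end Bregman

/-- Monotonicity of the auxiliary function `ψ`. Let `φ` be dual valid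
(thrice differentiable on `(0,1]`, `x·φ''(x) → 0` as `x → 0⁺`, `y ↦ d_φ(x,y)` strictly
convex on `[x,1]` for `x ∈ (0,1]`, `y ↦ d_φ(0,y)` strictly convex on `(0,1]`). Let
`p ∈ (0,1]`, `ν > 0`, and `y* ∈ [p,1]` with `φ''(y*)(y* − p) = ν`. Then the function
`ψ(x) = ν·x − d_φ(p,x)` is nondecreasing on `(0, y*]`, and its derivative
`ν − φ''(x)(x − p)` is nonnegative there. -/
theorem dual_helper_psi_monotone
    (φ φ' φ'' φ''' : ℝ → ℝ)
    (hd1 : ∀ t ∈ Set.Ioc (0:ℝ) 1, HasDerivWithinAt φ (φ' t) (Set.Ioc 0 1) t)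
    (hd2 : ∀ t ∈ Set.Ioc (0:ℝ) 1, HasDerivWithinAt φ' (φ'' t) (Set.Ioc 0 1) t)
    (hd3 : ∀ t ∈ Set.Ioc (0:ℝ) 1, HasDerivWithinAt φ'' (φ''' t) (Set.Ioc 0 1) t)
    (hlim : Filter.Tendsto (fun t => t * φ'' t) (nhdsWithin 0 (Set.Ioi 0)) (nhds 0))
    (hsc1 : ∀ t ∈ Set.Ioc (0:ℝ) 1, StrictConvexOn ℝ (Set.Icc t 1) (fun y => breg φ φ' t y))
    (hsc2 : StrictConvexOn ℝ (Set.Ioc 0 1) (fun y => breg φ φ' 0 y))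
    (p : ℝ) (hp : p ∈ Set.Ioc (0:ℝ) 1)
    (ν : ℝ) (hν : 0 < ν)
    (ystar : ℝ) (hystar : ystar ∈ Set.Icc p 1)
    (heq : φ'' ystar * (ystar - p) = ν) :
    (∀ x ∈ Set.Ioc (0:ℝ) ystar, 0 ≤ ν - φ'' x * (x - p)) ∧
    MonotoneOn (fun x => ν * x - breg φ φ' p x) (Set.Ioc 0 ystar) := by
  rw [← min_eq_right hystar.2, ← Ioc_inter_Iic]
  exact dual_helper_psi_monotone_general (convex_Ioc 0 1) hd1 hd2
    (fun t ht => (hsc1 t ht).convexOn.subset (fun _ hy => ⟨hy.2, hy.1.2⟩)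
      ((convex_Ioc 0 1).inter (convex_Ici t)))
    hp ⟨hp.1.trans_le hystar.1, hystar.2⟩ hystar.1 heq.le
end
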